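/- Let t be a planar binary rooted tree with n leaves written as t = 1_r ∘ (t₁,…,t_{r−1}, |) with r < n, where 1_r is the right comb with r leaves. Then the Möbius element factors as M_t = M_{1_r} ∘ (M_{t₁}, …, M_{t_{r−1}}, |). -/

import Mathlib

open Classical

/-- Planar binary rooted trees. `leaf` is the unique tree `|` with one leaf. -/
inductive PBT : Type
  | leaf : PBT
  | node : PBT → PBT → PBT
  deriving DecidableEq

/-- Number of leaves of a planar binary rooted tree. -/
def leavesCount : PBT → ℕ
  | .leaf => 1
  | .node l r => leavesCount l + leavesCount r

/-- Graft the tree `w` onto the leftmost (first) leaf of `t`. -/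
def graft1 : PBT → PBT → PBT
  | .leaf, w => w
  | .node l r, w => .node (graft1 l w) r

/-- The product `t ⋋ w := w ∘₁ (t ∨ |)`. -/
def lprod (t w : PBT) : PBT := graft1 w (.node t .leaf)

/-- A tree is `⋋`-irreducible if it is not a product of two (nonempty) trees. -/
def Irr (t : PBT) : Prop := ¬ ∃ u w : PBT, t = lprod u w

/-- One covering move of the Tamari order: a right rotation
`(a ∨ b) ∨ c ↦ a ∨ (b ∨ c)` applied at some internal node. -/
inductive TStep : PBT → PBT → Prop
  | rot (a b c : PBT) : TStep (.node (.node a b) c) (.node a (.node b c))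
  | left {a a' : PBT} (c : PBT) : TStep a a' → TStep (.node a c) (.node a' c)
  | right (a : PBT) {c c' : PBT} : TStep c c' → TStep (.node a c) (.node a c')

/-- The Tamari order on planar binary rooted trees: the reflexive transitive
closure of the rotation moves. -/
def tle : PBT → PBT → Prop := Relation.ReflTransGen TStep

/-- Auxiliary function: graft trees from the list `ws` onto the leaves of `t`
from left to right, returning the resulting tree and the unused trees. -/
def graftAux : PBT → List PBT → PBT × List PBT
  | .leaf, [] => (.leaf, [])
  | .leaf, w :: ws => (w, ws)
  | .node l r, ws =>
      let p := graftAux l ws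
      let q := graftAux r p.2
      (.node p.1 q.1, q.2)

/-- The grafting `t ∘ (w₁, …, w_r)`: graft the trees of the list `ws`
onto the leaves of `t`, from left to right. -/
def graftMany (t : PBT) (ws : List PBT) : PBT := (graftAux t ws).1

/-- The right comb `1ₙ`: `rightComb n` has `n+1` leaves, so `1ₙ = rightComb (n-1)`. -/
def rightComb : ℕ → PBT
  | 0 => .leaf
  | n + 1 => .node .leaf (rightComb n)

/-- The left comb `0ₙ`: `leftComb n` has `n+1` leaves, so `0ₙ = leftComb (n-1)`. -/
def leftComb : ℕ → PBT
  | 0 => .leaf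
  | n + 1 => .node (leftComb n) .leaf

/-- The multilinear extension of lists: sends a list of elements of the free
module on trees to an element of the free module on lists of trees. -/
noncomputable def listF : List (PBT →₀ ℤ) → (List PBT →₀ ℤ)
  | [] => Finsupp.single [] 1
  | g :: gs =>
      g.sum fun t a => (listF gs).sum fun l b => (a * b) • Finsupp.single (t :: l) 1

/-- The multilinear extension of the grafting operation `t₀ ∘ (w₁,…,w_r)`. -/
noncomputable def graftManyF (f : PBT →₀ ℤ) (gs : List (PBT →₀ ℤ)) : PBT →₀ ℤ :=
  f.sum fun t a => (listF gs).sum fun ws b => (a * b) • Finsupp.single (graftMany t ws) 1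

/-! ### Right vectors -/

def rv : PBT → List ℕ
  | .leaf => []
  | .node l r => rv l ++ (rv r).length :: rv r

def Bnd : List ℕ → Prop
  | [] => True
  | c :: cs => c ≤ cs.length ∧ Bnd cs

def Valid : List ℕ → Prop
  | [] => True
  | c :: cs => c ≤ cs.length ∧ Bnd (cs.take c) ∧ Valid cs

def LE2 (a b : List ℕ) : Prop := List.Forall₂ (· ≤ ·) a b

theorem bnd_append {a b : List ℕ} (ha : Bnd a) (hb : Bnd b) : Bnd (a ++ b) := by
  induction a with
  | nil => simpa
  | cons c cs ih =>
    simp only [List.cons_append, Bnd, List.length_append] at *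
    exact ⟨by omega, ih ha.2⟩

theorem bnd_of_valid {a : List ℕ} (h : Valid a) : Bnd a := by
  induction a with
  | nil => trivial
  | cons c cs ih => exact ⟨h.1, ih h.2.2⟩

theorem valid_append {a b : List ℕ} (ha : Valid a) (hb : Valid b) : Valid (a ++ b) := by
  induction a with
  | nil => simpa
  | cons c cs ih =>
    obtain ⟨h1, h2, h3⟩ := ha
    refine ⟨by simp; omega, ?_, ih h3⟩
    change Bnd ((cs ++ b).take c)
    rw [List.take_append_of_le_length h1]; exact h2

theorem valid_right {a b : List ℕ} (h : Valid (a ++ b)) : Valid b := by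
  induction a with
  | nil => simpa using h
  | cons c cs ih => exact ih h.2.2

theorem valid_left {a b : List ℕ} (h : Valid (a ++ b)) (ha : Bnd a) : Valid a := by
  induction a with
  | nil => trivial
  | cons c cs ih =>
    obtain ⟨h1, h2, h3⟩ := h
    refine ⟨ha.1, ?_, ih h3 ha.2⟩
    change Bnd ((cs ++ b).take c) at h2
    rwa [List.take_append_of_le_length ha.1] at h2

theorem valid_rv (t : PBT) : Valid (rv t) := by
  induction t with
  | leaf => trivial
  | node l r hl hr =>
    refine valid_append hl ⟨le_rfl, ?_, hr⟩
    rw [List.take_length]; exact bnd_of_valid hr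

theorem rv_graft1 (z x : PBT) : rv (graft1 z x) = rv x ++ rv z := by
  induction z with
  | leaf => simp [graft1, rv]
  | node l r hl hr => simp [graft1, rv, hl]

theorem bnd_le {a b : List ℕ} (h : LE2 a b) (hb : Bnd b) : Bnd a := by
  induction h with
  | nil => trivial
  | cons h1 h2 ih =>
    have := List.Forall₂.length_eq h2
    exact ⟨by have := hb.1; omega, ih hb.2⟩

theorem exists_rv (n : ℕ) : ∀ a : List ℕ, a.length ≤ n → Valid a → ∃ x, rv x = a := by
  induction n with
  | zero => intro a ha _; exact ⟨.leaf, by simp [rv]; simpa using ha⟩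
  | succ n ih =>
    intro a ha hv
    match a, ha, hv with
    | [], _, _ => exact ⟨.leaf, rfl⟩
    | c :: cs, ha, ⟨h1, h2, h3⟩ =>
      simp only [List.length_cons] at ha
      have h4 : Valid (cs.take c ++ cs.drop c) := by rwa [List.take_append_drop]
      obtain ⟨y, hy⟩ := ih (cs.take c) (by simp; omega) (valid_left h4 h2)
      obtain ⟨z, hz⟩ := ih (cs.drop c) (by simp; omega) (valid_right h4)
      refine ⟨graft1 z (.node .leaf y), ?_⟩
      rw [rv_graft1, hz]
      simp [rv, hy, h1]

theorem exists_forest (t : PBT) (h : t ≠ .leaf) : ∃ y z, t = graft1 z (.node .leaf y) := by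
  induction t with
  | leaf => exact absurd rfl h
  | node l r hl hr =>
    by_cases hh : l = .leaf
    · exact ⟨r, .leaf, by simp [graft1, hh]⟩
    · obtain ⟨y, z, e⟩ := hl hh
      exact ⟨y, .node z r, by simp [graft1, ← e]⟩

theorem LE2.refl (a : List ℕ) : LE2 a a := by
  induction a with
  | nil => exact .nil
  | cons c cs ih => exact .cons le_rfl ih

theorem LE2.trans {a b c : List ℕ} (h : LE2 a b) (h' : LE2 b c) : LE2 a c := by
  induction h generalizing c with
  | nil => exact h'
  | cons h1 h2 ih =>
    cases h' with
    | cons h3 h4 => exact .cons (le_trans h1 h3) (ih h4)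

theorem LE2.append {a b c d : List ℕ} (h : LE2 a b) (h' : LE2 c d) : LE2 (a ++ c) (b ++ d) := by
  induction h with
  | nil => exact h'
  | cons h1 h2 ih => exact .cons h1 ih

theorem LE2.length {a b : List ℕ} (h : LE2 a b) : a.length = b.length := List.Forall₂.length_eq h

theorem LE2.split {a b c d : List ℕ} (hl : a.length = b.length) (h : LE2 (a ++ c) (b ++ d)) :
    LE2 a b ∧ LE2 c d := by
  induction a generalizing b with
  | nil =>
    cases b with
    | nil => exact ⟨.nil, h⟩
    | cons => simp at hl
  | cons x a ih =>
    cases b with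
    | nil => simp at hl
    | cons y b =>
      cases h with
      | cons h1 h2 =>
        have := ih (by simpa using hl) h2
        exact ⟨.cons h1 this.1, this.2⟩

theorem LE2.antisymm {a b : List ℕ} (h : LE2 a b) (h' : LE2 b a) : a = b := by
  induction h with
  | nil => rfl
  | cons h1 h2 ih =>
    cases h' with
    | cons h3 h4 => rw [ih h4, le_antisymm h1 h3]

theorem LE2.sum {a b : List ℕ} (h : LE2 a b) : a.sum ≤ b.sum := by
  induction h with
  | nil => simp
  | cons h1 h2 ih => simp; omega

theorem tstep_rv {w t : PBT} (h : TStep w t) : LE2 (rv w) (rv t) ∧ (rv w).sum < (rv t).sum := by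
  induction h with
  | rot a b c =>
    constructor
    · simp only [rv, List.append_assoc, List.cons_append]
      refine LE2.append (LE2.refl _) (.cons ?_ (LE2.refl _))
      simp
    · simp [rv]
  | left c h ih =>
    refine ⟨LE2.append ih.1 (LE2.refl _), ?_⟩
    simp [rv]; omega
  | right a h ih =>
    refine ⟨LE2.append (LE2.refl _) (.cons (le_of_eq ih.1.length) ih.1), ?_⟩
    have := ih.1.length
    simp [rv]; omega

theorem tle_rv {w t : PBT} (h : tle w t) : LE2 (rv w) (rv t) := by
  induction h with
  | refl => exact LE2.refl _
  | tail _ h ih => exact ih.trans (tstep_rv h).1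

theorem tle_sum {w t : PBT} (h : tle w t) : w = t ∨ (rv w).sum < (rv t).sum := by
  rcases Relation.ReflTransGen.cases_tail h with h | ⟨c, h1, h2⟩
  · exact .inl h.symm
  · exact .inr (lt_of_le_of_lt (tle_rv h1).sum (tstep_rv h2).2)

theorem tle_lift (f : PBT → PBT) (hf : ∀ a b, TStep a b → TStep (f a) (f b)) {x y : PBT}
    (h : tle x y) : tle (f x) (f y) := by
  induction h with
  | refl => exact .refl
  | tail _ h ih => exact Relation.ReflTransGen.tail ih (hf _ _ h)

theorem tle_graft1 (b : PBT) {x x' : PBT} (h : tle x x') : tle (graft1 b x) (graft1 b x') := by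
  induction b with
  | leaf => exact h
  | node l r hl hr => exact tle_lift (fun a => PBT.node a r) (fun _ _ h => .left _ h) hl

theorem tle_graft1_left {b b' : PBT} (x : PBT) (h : tle b b') : tle (graft1 b x) (graft1 b' x) := by
  refine tle_lift (fun b => graft1 b x) (fun a b h => ?_) h
  change TStep (graft1 a x) (graft1 b x)
  induction h with
  | rot a b c => exact .rot _ _ _
  | left c h ih => exact .left _ ih
  | right a h ih => exact .right _ h

theorem tle_node_right (a : PBT) {x x' : PBT} (h : tle x x') : tle (.node a x) (.node a x') :=
  tle_lift (fun b => PBT.node a b) (fun _ _ h => .right _ h) h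

theorem graft1_assoc (a b c : PBT) : graft1 (graft1 a b) c = graft1 a (graft1 b c) := by
  induction a with
  | leaf => rfl
  | node l r hl hr => simp [graft1, hl]

theorem tle_of_rv_aux (n : ℕ) : ∀ k w t, (rv t).length ≤ n → (rv t).sum ≤ (rv w).sum + k →
    LE2 (rv w) (rv t) → tle w t := by
  induction n with
  | zero =>
    intro k w t hn _ h
    have hl := h.length
    have : t = .leaf := by cases t with
      | leaf => rfl
      | node => simp [rv] at hn
    have : w = .leaf := by cases w with
      | leaf => rfl
      | node => simp [rv] at hl; omega
    subst_vars; exact .refl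
  | succ n ihn =>
    intro k
    induction k with
    | zero =>
      intro w t hn hk h
      by_cases ht : t = .leaf
      · subst ht
        have hl := h.length
        have : w = .leaf := by cases w with
          | leaf => rfl
          | node => simp [rv] at hl
        subst_vars; exact .refl
      by_cases hw : w = .leaf
      · subst hw
        have hl := h.length
        cases t with
          | leaf => exact absurd rfl ht
          | node => simp [rv] at hl
      obtain ⟨y', z', rfl⟩ := exists_forest t ht
      obtain ⟨y, z, rfl⟩ := exists_forest w hw
      simp only [rv_graft1, rv, List.nil_append, List.cons_append] at h hn hk
      cases h with
      | cons h1 h2 =>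
      have := LE2.sum h2
      simp at hk this
      have e : (rv y).length = (rv y').length := by omega
      obtain ⟨h3, h4⟩ := LE2.split e h2
      simp at hn
      exact .trans (tle_graft1_left _ (ihn _ _ _ (by omega) (Nat.le_add_left _ _) h4))
        (tle_graft1 _ (tle_node_right _ (ihn _ _ _ (by omega) (Nat.le_add_left _ _) h3)))
    | succ k ihk =>
      intro w t hn hk h
      by_cases ht : t = .leaf
      · subst ht
        have hl := h.length
        have : w = .leaf := by cases w with
          | leaf => rfl
          | node => simp [rv] at hl
        subst_vars; exact .refl
      by_cases hw : w = .leaf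
      · subst hw
        have hl := h.length
        cases t with
          | leaf => exact absurd rfl ht
          | node => simp [rv] at hl
      obtain ⟨y', z', rfl⟩ := exists_forest t ht
      obtain ⟨y, z, rfl⟩ := exists_forest w hw
      have h0 := h
      have hk0 := hk
      have hn0 := hn
      simp only [rv_graft1, rv, List.nil_append, List.cons_append] at h hn hk
      cases h with
      | cons h1 h2 =>
      simp at hn
      by_cases e : (rv y).length = (rv y').length
      · obtain ⟨h3, h4⟩ := LE2.split e h2
        exact .trans (tle_graft1_left _ (ihn _ _ _ (by omega) (Nat.le_add_left _ _) h4))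
          (tle_graft1 _ (tle_node_right _ (ihn _ _ _ (by omega) (Nat.le_add_left _ _) h3)))
      · have hl := LE2.length h2
        by_cases hz : z = .leaf
        · subst hz; simp [rv] at hl; omega
        obtain ⟨a, b, rfl⟩ := exists_forest z hz
        have hstep : TStep (graft1 (graft1 b (.node .leaf a)) (.node .leaf y))
            (graft1 (graft1 b .leaf) (.node .leaf (.node y a))) := by
          rw [graft1_assoc, graft1_assoc]
          simp only [graft1]
          clear * -
          induction b with
          | leaf => exact .rot _ _ _
          | node l r hl hr => exact .left _ hl
        refine Relation.ReflTransGen.head hstep (ihk _ _ hn0 ?_ ?_)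
        · have := (tstep_rv hstep).2
          omega
        · simp only [rv_graft1, rv, List.nil_append, List.cons_append, List.append_nil,
            List.append_assoc] at h2 ⊢
          refine .cons ?_ h2
          have hb : Bnd (rv y') := bnd_of_valid (valid_rv y')
          have hlt : (rv y).length < (rv y').length := by omega
          clear * - h2 hb hlt
          generalize rv y = A at *
          generalize rv y' = B at *
          induction A generalizing B with
          | nil =>
            cases B with
            | nil => simp at hlt
            | cons c B =>
              cases h2 with
              | cons h3 h4 =>
                have := hb.1
                simp; omega
          | cons x A ih =>
            cases B with
            | nil => simp at hlt
            | cons c B =>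
              cases h2 with
              | cons h3 h4 =>
                have := ih B hb.2 h4 (by simpa using hlt)
                simp at this ⊢; omega

theorem tle_iff {w t : PBT} : tle w t ↔ LE2 (rv w) (rv t) :=
  ⟨tle_rv, fun h => tle_of_rv_aux _ _ _ _ le_rfl (Nat.le_add_left _ _) h⟩

theorem tle_antisymm {w t : PBT} (h : tle w t) (h' : tle t w) : w = t := by
  rcases tle_sum h with h | h
  · exact h
  · have := (tle_rv h').sum; omega

theorem rv_inj {w t : PBT} (h : rv w = rv t) : w = t :=
  tle_antisymm (tle_iff.2 (h ▸ LE2.refl _)) (tle_iff.2 (h ▸ LE2.refl _))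

/-! ### Grafting and vectors -/

def EE (k : ℕ) (ss : List ℕ) : ℕ := k + (ss.take (k + 1)).sum

def blk' : List ℕ → List (List ℕ) → List ℕ
  | [], [w] => w
  | k :: ks, w :: ws => w ++ EE k (ws.map List.length) :: blk' ks ws
  | _, _ => []

def blk : List ℕ → List (List ℕ) → List ℕ
  | k :: ks, w :: ws => w ++ EE k (ws.map List.length) :: blk ks ws
  | _, _ => []

theorem length_blk' (b : List ℕ) (ws : List (List ℕ)) (h : ws.length = b.length + 1) :
    (blk' b ws).length = b.length + (ws.map List.length).sum := by
  induction b generalizing ws with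
  | nil =>
    match ws, h with
    | [w], _ => simp [blk']
  | cons k b ih =>
    match ws, h with
    | w :: ws, h =>
      simp [blk', ih ws (by simpa using h)]; omega

theorem blk'_append (a b : List ℕ) (ws1 ws2 : List (List ℕ)) (h1 : ws1.length = a.length + 1)
    (h2 : ws2.length = b.length + 1) (ha : Bnd a) :
    blk' (a ++ b.length :: b) (ws1 ++ ws2) = blk' a ws1 ++ (blk' b ws2).length :: blk' b ws2 := by
  induction a generalizing ws1 with
  | nil =>
    match ws1, h1 with
    | [w], _ =>
      have : (ws2.map List.length).take (b.length + 1) = ws2.map List.length :=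
        List.take_of_length_le (by simp [h2])
      simp [blk', length_blk' b ws2 h2, EE, this]
  | cons k a ih =>
    match ws1, h1 with
    | w :: ws1, h1 =>
      have h1' : ws1.length = a.length + 1 := by simpa using h1
      have := ha.1
      simp only [List.cons_append, blk', ih ws1 h1' ha.2, List.append_assoc, EE, List.map_append]
      rw [List.take_append_of_le_length (by simp; omega)]

theorem rv_graftAux (v : PBT) : ∀ ws rest : List PBT, ws.length = (rv v).length + 1 →
    (graftAux v (ws ++ rest)).2 = rest ∧
      rv (graftAux v (ws ++ rest)).1 = blk' (rv v) (ws.map rv) := by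
  induction v with
  | leaf =>
    intro ws rest h
    match ws, h with
    | [w], _ => simp [graftAux, rv, blk']
  | node l r hl hr =>
    intro ws rest h
    simp only [rv, List.length_append, List.length_cons] at h
    obtain ⟨ws1, ws2, rfl, e1⟩ : ∃ ws1 ws2, ws = ws1 ++ ws2 ∧ ws1.length = (rv l).length + 1 :=
      ⟨ws.take ((rv l).length + 1), ws.drop ((rv l).length + 1), by simp, by simp; omega⟩
    have e2 : ws2.length = (rv r).length + 1 := by simp at h; omega
    obtain ⟨a1, a2⟩ := hl ws1 (ws2 ++ rest) e1
    obtain ⟨b1, b2⟩ := hr ws2 rest e2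
    simp only [graftAux, List.append_assoc, a1, b1, true_and, rv, a2, b2, List.map_append]
    rw [blk'_append _ _ _ _ (by simpa using e1) (by simpa using e2) (bnd_of_valid (valid_rv l))]

theorem blk'_nil (ks : List ℕ) (ws : List (List ℕ)) (h : ks.length = ws.length) :
    blk' ks (ws ++ [[]]) = blk ks ws := by
  induction ks generalizing ws with
  | nil =>
    match ws, h with
    | [], _ => rfl
  | cons k ks ih =>
    match ws, h with
    | w :: ws, h =>
      simp only [List.cons_append, blk', blk, ih ws (by simpa using h), EE, List.map_append]
      simp [List.take_append]
      cases k + 1 - ws.length <;> simp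

theorem rv_graftMany (v : PBT) (ws : List PBT) (h : (rv v).length = ws.length) :
    rv (graftMany v (ws ++ [.leaf])) = blk (rv v) (ws.map rv) := by
  have := (rv_graftAux v (ws ++ [.leaf]) [] (by simp [h])).2
  simp only [List.append_nil] at this
  rw [graftMany, this]
  simp only [List.map_append, List.map_cons, rv, List.map_nil]
  exact blk'_nil _ _ (by simpa using h)

/-! ### The adjoint -/

def mask : List ℕ → List Bool
  | [] => []
  | s :: ss => List.replicate s false ++ true :: mask ss

def contr : List Bool → List ℕ → List ℕ
  | true :: bs, c :: cs => (bs.take c).count true :: contr bs cs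
  | false :: bs, _ :: cs => contr bs cs
  | _, _ => []

def spl : List ℕ → List ℕ → List (List ℕ)
  | [], _ => []
  | s :: ss, d => d.take s :: spl ss (d.drop (s + 1))

theorem length_mask (ss : List ℕ) : (mask ss).length = ss.length + ss.sum := by
  induction ss with
  | nil => rfl
  | cons s ss ih => simp [mask, ih]; omega

theorem count_mask (ss : List ℕ) : (mask ss).count true = ss.length := by
  induction ss with
  | nil => rfl
  | cons s ss ih => simp [mask, ih, List.count_replicate]

theorem count_take_mask (ss : List ℕ) (c k : ℕ) (hc : c ≤ (mask ss).length) :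
    ((mask ss).take c).count true ≤ k ↔ c ≤ EE k ss := by
  induction ss generalizing c k with
  | nil =>
    simp [mask] at hc
    simp [mask, hc]
  | cons s ss ih =>
    by_cases h : c ≤ s
    · have : EE k (s :: ss) = k + (s + (ss.take k).sum) := by simp [EE]
      rw [this, mask, List.take_append_of_le_length (by simpa using h)]
      simp [List.count_replicate]; omega
    · obtain ⟨c', rfl⟩ : ∃ c', c = s + (c' + 1) := ⟨c - s - 1, by omega⟩
      have e : (mask (s :: ss)).take (s + (c' + 1))
          = List.replicate s false ++ true :: (mask ss).take c' := by
        simp [mask, List.take_append]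
      rw [e]
      simp only [mask, List.length_append, List.length_cons, List.length_replicate] at hc
      cases k with
      | zero => simp [EE]
      | succ k =>
        have := ih c' k (by omega)
        simp only [EE] at this
        simp [List.count_replicate, EE, this]; omega

theorem length_contr (bs : List Bool) (cs : List ℕ) (h : bs.length = cs.length) :
    (contr bs cs).length = bs.count true := by
  induction bs generalizing cs with
  | nil => cases cs <;> simp [contr]
  | cons b bs ih =>
    match cs, h with
    | c :: cs, h => cases b <;> simp [contr, ih cs (by simpa using h)]

theorem contr_append (bs bs' : List Bool) (cs cs' : List ℕ) (h : bs.length = cs.length)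
    (hb : Bnd cs) : contr (bs ++ bs') (cs ++ cs') = contr bs cs ++ contr bs' cs' := by
  induction bs generalizing cs with
  | nil =>
    match cs, h with
    | [], _ => simp [contr]
  | cons b bs ih =>
    match cs, h with
    | c :: cs, h =>
      have h' : bs.length = cs.length := by simpa using h
      have := hb.1
      cases b <;> simp [contr, ih cs h' hb.2]
      rw [List.take_append_of_le_length (by omega)]

theorem bnd_contr (bs : List Bool) (cs : List ℕ) (h : bs.length = cs.length) :
    Bnd (contr bs cs) := by
  induction bs generalizing cs with
  | nil => simp [contr, Bnd]
  | cons b bs ih =>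
    match cs, h with
    | c :: cs, h =>
      have h' : bs.length = cs.length := by simpa using h
      cases b
      · exact ih cs h'
      · refine ⟨?_, ih cs h'⟩
        rw [length_contr _ _ h']
        exact (List.take_sublist _ _).count_le _

theorem valid_contr (bs : List Bool) (cs : List ℕ) (h : bs.length = cs.length) (hv : Valid cs) :
    Valid (contr bs cs) := by
  induction bs generalizing cs with
  | nil => simp [contr, Valid]
  | cons b bs ih =>
    match cs, h, hv with
    | c :: cs, h, ⟨h1, h2, h3⟩ =>
      have h' : bs.length = cs.length := by simpa using h
      cases b
      · exact ih cs h' h3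
      · have hlen : (bs.take c).length = (cs.take c).length := by simp [h']
        refine ⟨?_, ?_, ih cs h' h3⟩
        · rw [length_contr _ _ h']
          exact (List.take_sublist _ _).count_le _
        · have := contr_append (bs.take c) (bs.drop c) (cs.take c) (cs.drop c) hlen h2
          rw [List.take_append_drop, List.take_append_drop] at this
          rw [this, ← length_contr _ _ hlen, List.take_left]
          exact bnd_contr _ _ hlen

theorem contr_mask (s c : ℕ) (ss : List ℕ) (b d : List ℕ) (hb : b.length = s) :
    contr (mask (s :: ss)) (b ++ c :: d) = ((mask ss).take c).count true :: contr (mask ss) d := by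
  subst hb
  induction b with
  | nil => simp [mask, contr]
  | cons x b ih =>
    simpa [mask, contr, List.replicate_succ] using ih

theorem spl_cons (s c : ℕ) (ss : List ℕ) (b d : List ℕ) (hb : b.length = s) :
    spl (s :: ss) (b ++ c :: d) = b :: spl ss d := by
  subst hb
  simp [spl, List.drop_append, List.drop_eq_nil_of_le]

theorem decomp (s : ℕ) (ss d : List ℕ) (hd : d.length = (mask (s :: ss)).length) :
    ∃ b c d', d = b ++ c :: d' ∧ b.length = s ∧ d'.length = (mask ss).length := by
  simp [mask] at hd
  refine ⟨d.take s, d[s]'(by omega), d.drop (s + 1), ?_, by simp; omega, by simp; omega⟩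
  rw [List.cons_getElem_drop_succ, List.take_append_drop]

theorem bnd_right {a b : List ℕ} (h : Bnd (a ++ b)) : Bnd b := by
  induction a with
  | nil => simpa using h
  | cons c cs ih => exact ih h.2

theorem adj (ss d ks : List ℕ) (ws : List (List ℕ)) (hd : d.length = (mask ss).length)
    (hb : Bnd d) (hk : ks.length = ss.length) (hw : ws.map List.length = ss) :
    LE2 d (blk ks ws) ↔ LE2 (contr (mask ss) d) ks ∧ List.Forall₂ LE2 (spl ss d) ws := by
  induction ss generalizing d ks ws with
  | nil =>
    simp at hk hw
    simp [mask] at hd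
    subst hk hw hd
    simp [contr, spl, blk, LE2, mask]
  | cons s ss ih =>
    obtain ⟨b, c, d', rfl, h1, h2⟩ := decomp s ss d hd
    match ks, hk, ws, hw with
    | k :: ks, hk, w :: ws, hw =>
      simp only [List.map_cons, List.cons.injEq] at hw
      have hbr := bnd_right hb
      rw [contr_mask _ _ _ _ _ h1, spl_cons _ _ _ _ _ h1, blk, List.forall₂_cons]
      have i1 := ih d' ks ws h2 hbr.2 (by simpa using hk) hw.2
      have i2 := count_take_mask ss c k (by have := hbr.1; omega)
      rw [hw.2]
      constructor
      · intro h
        obtain ⟨j1, j2⟩ := LE2.split (by omega) h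
        cases j2 with
        | cons j2 j3 =>
          have := i1.1 j3
          exact ⟨.cons (i2.2 j2) this.1, j1, this.2⟩
      · rintro ⟨j1, j2, j3⟩
        cases j1 with
        | cons j1 j4 => exact LE2.append j2 (.cons (i2.1 j1) (i1.2 ⟨j4, j3⟩))

theorem length_rv_rightComb (n : ℕ) : (rv (rightComb n)).length = n := by
  induction n with
  | zero => rfl
  | succ n ih => simp [rightComb, rv, ih]

theorem top_iff (ss d : List ℕ) (ws : List (List ℕ)) (hd : d.length = (mask ss).length)
    (hb : Bnd d) (hw : ws.map List.length = ss) :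
    d = blk (rv (rightComb ss.length)) ws ↔
      contr (mask ss) d = rv (rightComb ss.length) ∧ spl ss d = ws := by
  induction ss generalizing d ws with
  | nil =>
    simp at hw
    simp [mask] at hd
    subst hw hd
    simp [contr, spl, blk, mask, rightComb, rv]
  | cons s ss ih =>
    obtain ⟨b, c, d', rfl, h1, h2⟩ := decomp s ss d hd
    match ws, hw with
    | w :: ws, hw =>
      simp only [List.map_cons, List.cons.injEq] at hw
      have hbr := bnd_right hb
      rw [contr_mask _ _ _ _ _ h1, spl_cons _ _ _ _ _ h1]
      have i1 := ih d' ws h2 hbr.2 hw.2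
      simp only [List.length_cons, rightComb, rv, List.nil_append, blk, hw.2, length_rv_rightComb]
      have hE : EE ss.length ss = (mask ss).length := by
        simp [EE, length_mask, List.take_of_length_le]
      have i2 : c = (mask ss).length ↔ ((mask ss).take c).count true = ss.length := by
        have hc : c ≤ (mask ss).length := by have := hbr.1; omega
        constructor
        · rintro rfl; rw [List.take_length, count_mask]
        · intro h
          rcases Nat.eq_zero_or_pos ss.length with h0 | h0
          · have : ss = [] := by simpa using h0
            subst this; simp [mask] at hc ⊢; exact hc
          · have := count_take_mask ss c (ss.length - 1) hc
            have e : EE (ss.length - 1) ss = (ss.length - 1) + ss.sum := by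
              simp [EE, Nat.sub_add_cancel h0]
            rw [e] at this
            rw [length_mask] at hc ⊢
            omega
      rw [hE]
      constructor
      · intro h
        obtain ⟨j1, j2⟩ := List.append_inj h (by omega)
        simp only [List.cons.injEq] at j2 ⊢
        have := i1.1 j2.2
        exact ⟨⟨i2.1 j2.1, this.1⟩, j1, this.2⟩
      · intro h
        simp only [List.cons.injEq] at h
        rw [h.2.1, i2.2 h.1.1, i1.2 ⟨h.1.2, h.2.2⟩]

theorem spl_trees (ss d : List ℕ) (ws : List (List ℕ)) (hd : d.length = (mask ss).length)
    (hv : Valid d) (hb : ∀ w ∈ ws, Bnd w) (h : List.Forall₂ LE2 (spl ss d) ws) :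
    ∃ xs : List PBT, xs.map rv = spl ss d := by
  induction ss generalizing d ws with
  | nil => exact ⟨[], rfl⟩
  | cons s ss ih =>
    obtain ⟨b, c, d', rfl, h1, h2⟩ := decomp s ss d hd
    rw [spl_cons _ _ _ _ _ h1] at h ⊢
    cases h with
    | cons j1 j2 =>
      obtain ⟨xs, hxs⟩ := ih d' _ h2 (valid_right hv).2.2 (fun w hw => hb w (by simp [hw])) j2
      obtain ⟨x, hx⟩ := exists_rv _ b le_rfl (valid_left hv (bnd_le j1 (hb _ (by simp))))
      exact ⟨x :: xs, by simp [hx, hxs]⟩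

theorem forall2_map (xs ws : List PBT) :
    List.Forall₂ LE2 (xs.map rv) (ws.map rv) ↔ List.Forall₂ tle xs ws := by
  have : tle = fun c b => LE2 (rv c) (rv b) := by
    funext c b; exact propext tle_iff
  simp [List.forall₂_map_left_iff, List.forall₂_map_right_iff, this]

/-- The Galois connection. -/
theorem galois (w : PBT) (ts : List PBT)
    (h : tle w (graftMany (rightComb ts.length) (ts ++ [.leaf]))) :
    ∃ (v0 : PBT) (xs : List PBT),
      (∀ v ws, tle v (rightComb ts.length) → List.Forall₂ tle ws ts →
        (tle w (graftMany v (ws ++ [.leaf])) ↔ tle v0 v ∧ List.Forall₂ tle xs ws)) ∧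
      (w = graftMany (rightComb ts.length) (ts ++ [.leaf]) ↔
        v0 = rightComb ts.length ∧ xs = ts) := by
  set ss := ts.map (fun t => (rv t).length) with hss
  have hsl : ss.length = ts.length := by simp [hss]
  have hr := rv_graftMany (rightComb ts.length) ts (length_rv_rightComb _)
  have hle := tle_iff.1 h
  have hvw := valid_rv w
  have hbw := bnd_of_valid hvw
  have hmap : (ts.map rv).map List.length = ss := by simp [hss]
  have hlen : ∀ (ks : List ℕ) (ws : List (List ℕ)), ks.length = ws.length →
      (blk ks ws).length = (mask (ws.map List.length)).length := by
    intro ks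
    induction ks with
    | nil => intro ws h; match ws, h with
      | [], _ => rfl
    | cons k ks ih => intro ws h; match ws, h with
      | w :: ws, h => simp [blk, mask, ih ws (by simpa using h)]
  have hd : (rv w).length = (mask ss).length := by
    rw [hle.length, hr, hlen _ _ (by simp [length_rv_rightComb]), hmap]
  rw [hr] at hle
  have hspl := ((adj ss (rv w) _ _ hd hbw (by rw [length_rv_rightComb, hsl]) hmap).1 hle).2
  obtain ⟨xs, hxs⟩ := spl_trees ss (rv w) _ hd hvw (by
    intro x hx
    obtain ⟨y, _, rfl⟩ := List.mem_map.1 hx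
    exact bnd_of_valid (valid_rv y)) hspl
  obtain ⟨v0, hv0⟩ := exists_rv _ _ le_rfl (valid_contr (mask ss) (rv w) hd.symm hvw)
  refine ⟨v0, xs, ?_, ?_⟩
  · intro v ws hv hws
    have hvl : (rv v).length = ts.length := by
      rw [(tle_rv hv).length, length_rv_rightComb]
    have hwl : (ws.map rv).map List.length = ss := by
      rw [hss]; clear * - hws
      induction hws with
      | nil => rfl
      | cons h1 h2 ih => simp [(tle_rv h1).length]; simpa using ih
    rw [tle_iff, rv_graftMany v ws (by rw [hvl, hws.length_eq]),
      adj ss (rv w) (rv v) _ hd hbw (by rw [hvl, hsl]) hwl, tle_iff, hv0, ← hxs, forall2_map]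
  · have := top_iff ss (rv w) (ts.map rv) hd hbw hmap
    rw [hsl, ← hr, ← hxs, ← hv0] at this
    have inj : Function.Injective rv := fun _ _ h => rv_inj h
    rw [inj.eq_iff, inj.eq_iff, (List.map_injective_iff.2 inj).eq_iff] at this
    exact this

theorem graft_mono (v : PBT) (ts ws : List PBT) (hv : tle v (rightComb ts.length))
    (hws : List.Forall₂ tle ws ts) :
    tle (graftMany v (ws ++ [.leaf])) (graftMany (rightComb ts.length) (ts ++ [.leaf])) := by
  have hvl : (rv v).length = ts.length := by
    rw [(tle_rv hv).length, length_rv_rightComb]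
  rw [tle_iff, rv_graftMany _ _ (by rw [hvl, hws.length_eq]),
    rv_graftMany _ _ (length_rv_rightComb _)]
  replace hv := tle_rv hv
  clear hvl
  generalize rv (rightComb ts.length) = a at *
  generalize rv v = b at *
  induction hv generalizing ws ts with
  | nil => simp [blk]; exact .nil
  | cons h1 h2 ih =>
    cases hws with
    | nil => simp [blk]; exact .nil
    | @cons w t ws ts h3 h4 =>
      have e : (ws.map rv).map List.length = (ts.map rv).map List.length := by
        clear * - h4
        induction h4 with
        | nil => rfl
        | cons h1 h2 ih => simp [(tle_rv h1).length]; simpa using ih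
      simp only [List.map_cons, blk, e]
      refine LE2.append (tle_rv h3) (.cons ?_ (ih _ _ h4))
      exact Nat.add_le_add h1 ((List.take_sublist_take_left (by omega)).sum_le_sum (by simp))

/-! ### Linear algebra -/

noncomputable abbrev ev {α : Type} (g : α → ℤ) : (α →₀ ℤ) →ₗ[ℤ] ℤ := Finsupp.linearCombination ℤ g

theorem ev_congr {α : Type} {g g' : α → ℤ} {f : α →₀ ℤ} (h : ∀ a, f a ≠ 0 → g a = g' a) :
    ev g f = ev g' f := by
  simp only [ev, Finsupp.linearCombination_apply]
  exact Finsupp.sum_congr (fun a ha => by rw [h a (by simpa using ha)])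

theorem ev_listF_cons (G : List PBT → ℤ) (g : PBT →₀ ℤ) (gs : List (PBT →₀ ℤ)) :
    ev G (listF (g :: gs)) = ev (fun t => ev (fun l => G (t :: l)) (listF gs)) g := by
  simp only [listF, Finsupp.sum, map_sum, map_smul, ev, Finsupp.linearCombination_single,
    Finsupp.linearCombination_apply, Finset.smul_sum]
  simp [mul_assoc]

theorem ev_graftManyF (G : PBT → ℤ) (f : PBT →₀ ℤ) (gs : List (PBT →₀ ℤ)) :
    ev G (graftManyF f gs) = ev (fun v => ev (fun ws => G (graftMany v ws)) (listF gs)) f := by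
  simp only [graftManyF, Finsupp.sum, map_sum, map_smul, ev, Finsupp.linearCombination_single,
    Finsupp.linearCombination_apply, Finset.smul_sum]
  simp [mul_assoc]

theorem ext_ev (f g : PBT →₀ ℤ)
    (h : ∀ w, ev (fun z => if tle w z then (1 : ℤ) else 0) f
      = ev (fun z => if tle w z then (1 : ℤ) else 0) g) : f = g := by
  by_contra hne
  have hne' : f - g ≠ 0 := sub_ne_zero.2 hne
  obtain ⟨z, hz, hmax⟩ := (f - g).support.exists_max_image (fun z => (rv z).sum)
    (Finsupp.support_nonempty_iff.2 hne')
  have h1 : ev (fun y => if tle z y then (1 : ℤ) else 0) (f - g) = 0 := by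
    rw [map_sub, h, sub_self]
  rw [ev, Finsupp.linearCombination_apply, Finsupp.sum, Finset.sum_eq_single z] at h1
  · rw [if_pos (show tle z z from .refl)] at h1
    exact (Finsupp.mem_support_iff.1 hz) (by simpa using h1)
  · intro y hy hyz
    rw [if_neg, smul_zero]
    intro hzy
    rcases tle_sum hzy with e | e
    · exact hyz e.symm
    · have := hmax y hy; omega
  · intro hh; exact absurd hz hh

theorem ev_M (μ : PBT → PBT → ℤ) (M : PBT → (PBT →₀ ℤ))
    (hM : ∀ t w : PBT, M t w = μ w t)
    (hμrefl : ∀ t : PBT, μ t t = 1)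
    (hμzero : ∀ w t : PBT, ¬ tle w t → μ w t = 0)
    (hμsum : ∀ w t : PBT, tle w t → w ≠ t →
      (∑ᶠ z : PBT, if tle w z ∧ tle z t then μ z t else 0) = 0)
    (w t : PBT) (a : ℤ) :
    ev (fun z => if tle w z then a else 0) (M t) = if w = t then a else 0 := by
  have key : ev (fun z => if tle w z then a else 0) (M t)
      = (∑ᶠ z : PBT, if tle w z ∧ tle z t then μ z t else 0) * a := by
    rw [finsum_eq_sum_of_support_subset (s := (M t).support), ev,
      Finsupp.linearCombination_apply, Finsupp.sum, Finset.sum_mul]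
    · refine Finset.sum_congr rfl fun z hz => ?_
      have : tle z t := by
        by_contra hh
        exact (Finsupp.mem_support_iff.1 hz) (by rw [hM, hμzero _ _ hh])
      by_cases hw : tle w z <;> simp [hw, this, hM]
    · intro z hz
      rw [Function.mem_support] at hz
      simp only [Finset.mem_coe, Finsupp.mem_support_iff, hM]
      intro h0; exact hz (by simp [h0])
  rw [key]
  split_ifs with h
  · subst h
    rw [finsum_eq_single _ w]
    · simp [hμrefl, show tle w w from .refl]
    · intro z hz
      rw [if_neg]
      exact fun hh => hz (tle_antisymm hh.2 hh.1)
  · by_cases hw : tle w t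
    · rw [hμsum w t hw h, zero_mul]
    · rw [finsum_eq_zero_of_forall_eq_zero, zero_mul]
      intro z
      rw [if_neg]
      exact fun hh => hw (hh.1.trans hh.2)

theorem ev_list (M : PBT → (PBT →₀ ℤ))
    (hsupp : ∀ t w, M t w ≠ 0 → tle w t)
    (hev : ∀ (w t : PBT) (a : ℤ),
      ev (fun z => if tle w z then a else 0) (M t) = if w = t then a else 0)
    (ts xs : List PBT) (a : ℤ) (G : List PBT → ℤ) (hl : xs.length = ts.length)
    (hG : ∀ ws, List.Forall₂ tle ws ts →
      G (ws ++ [.leaf]) = if List.Forall₂ tle xs ws then a else 0) :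
    ev G (listF (ts.map M ++ [Finsupp.single PBT.leaf 1])) = if xs = ts then a else 0 := by
  induction ts generalizing xs a G with
  | nil =>
    have : xs = [] := by simpa using hl
    subst this
    have := hG [] .nil
    simp only [List.map_nil, List.nil_append, ev_listF_cons]
    simpa [listF, ev] using this
  | cons t ts ih =>
    match xs, hl with
    | x :: xs, hl =>
      simp only [List.map_cons, List.cons_append, ev_listF_cons]
      rw [ev_congr (g' := fun z => if tle x z then (if xs = ts then a else 0) else 0), hev]
      · by_cases h1 : x = t <;> by_cases h2 : xs = ts <;> simp [h1, h2]
      · intro z hz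
        have hzt := hsupp _ _ hz
        rw [ih xs (if tle x z then a else 0) (fun l => G (z :: l)) (by simpa using hl)]
        · by_cases h1 : tle x z <;> by_cases h2 : xs = ts <;> simp [h1, h2]
        · intro ws hws
          have := hG (z :: ws) (.cons hzt hws)
          rw [List.cons_append] at this
          rw [this]
          by_cases h1 : tle x z <;> by_cases h2 : List.Forall₂ tle xs ws <;> simp [h1, h2]

/-- If `t = 1_r ∘ (t₁,…,t_{r−1}, |)` with `r < n = |t|` leaves, then the
Möbius element factors as `M_t = M_{1_r} ∘ (M_{t₁}, …, M_{t_{r−1}}, |)`. -/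
theorem stmt11
    (μ : PBT → PBT → ℤ) (M : PBT → (PBT →₀ ℤ))
    (hM : ∀ t w : PBT, M t w = μ w t)
    (hμrefl : ∀ t : PBT, μ t t = 1)
    (hμzero : ∀ w t : PBT, ¬ tle w t → μ w t = 0)
    (hμsum : ∀ w t : PBT, tle w t → w ≠ t →
      (∑ᶠ z : PBT, if tle w z ∧ tle z t then μ z t else 0) = 0)
    (r : ℕ) (hr : 1 ≤ r) (t : PBT) (ts : List PBT)
    (hlen : ts.length + 1 = r)
    (ht : t = graftMany (rightComb (r - 1)) (ts ++ [PBT.leaf]))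
    (hlt : r < leavesCount t) :
    M t = graftManyF (M (rightComb (r - 1))) (ts.map M ++ [Finsupp.single PBT.leaf 1]) := by
  subst hlen
  simp only [Nat.add_sub_cancel] at ht ⊢
  have hev := ev_M μ M hM hμrefl hμzero hμsum
  have hsupp : ∀ t w, M t w ≠ 0 → tle w t := by
    intro t w h
    by_contra hh
    exact h (by rw [hM, hμzero _ _ hh])
  refine ext_ev _ _ fun w => ?_
  rw [hev, ev_graftManyF]
  by_cases hw : tle w t
  · rw [ht] at hw
    obtain ⟨v0, xs, h1, h2⟩ := galois w ts hw
    have hlx : xs.length = ts.length := by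
      have := (h1 _ ts .refl (List.forall₂_same.2 fun _ _ => .refl)).1 hw
      exact this.2.length_eq
    rw [ev_congr (g' := fun v => if tle v0 v then (if xs = ts then 1 else 0) else 0), hev]
    · rw [ht]
      by_cases h3 : v0 = rightComb ts.length <;> by_cases h4 : xs = ts <;> simp [h2, h3, h4]
    · intro v hv
      have hv := hsupp _ _ hv
      rw [ev_list M hsupp hev ts xs (if tle v0 v then 1 else 0) _ hlx]
      · by_cases h3 : tle v0 v <;> by_cases h4 : xs = ts <;> simp [h3, h4]
      · intro ws hws
        have := h1 v ws hv hws
        by_cases h3 : tle v0 v <;> by_cases h4 : List.Forall₂ tle xs ws <;> simp [this, h3, h4]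
  · have hne : w ≠ t := by rintro rfl; exact hw .refl
    rw [if_neg hne, ev_congr (g' := fun v => 0)]
    · simp [ev, Finsupp.linearCombination_apply]
    · intro v hv
      have hv := hsupp _ _ hv
      rw [ev_list M hsupp hev ts ts 0 _ rfl]
      · simp
      · intro ws hws
        rw [if_neg]
        · simp
        · intro h
          exact hw (ht ▸ h.trans (graft_mono v ts ws hv hws))
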